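/- (Rational extension of the Heisenberg algebra) There exist a division ring K and an injective ring homomorphism ι : H → K such that every element of K can be written as (ι b)⁻¹ · (ι a) for some a, b ∈ H with b ≠ 0. (Thus the Heisenberg algebra embeds into an algebra with division, its rational extension, in which every element is a fraction with numerator and denominator from H.) -/

import Mathlib

open Polynomial

/-- Multiplication by X on ℂ[X]. -/
noncomputable def M : Module.End ℂ (Polynomial ℂ) := LinearMap.mulLeft ℂ Polynomial.X

/-- Formal derivative on ℂ[X]. -/
noncomputable def D : Module.End ℂ (Polynomial ℂ) := Polynomial.derivative

/-- The Heisenberg algebra, as a ring in its own right. -/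
noncomputable def H : Subalgebra ℂ (Module.End ℂ (Polynomial ℂ)) :=
  Algebra.adjoin ℂ ({M, D} : Set (Module.End ℂ (Polynomial ℂ)))

/-!
Let `⁅y, x⁆ = 1` in an algebra over a field of characteristic zero. Normal ordering writes every
element of the subalgebra generated by `x` and `y` as `∑ xⁱ qᵢ(y)`. The derivation `⁅y, ·⁆` acts on
such a sum as `d/dx`, so applying it as often as the degree in `x` leaves a nonzero integer multiple
of the leading coefficient `q(y)`, and by the iterated Leibniz rule the leading coefficients of a
product multiply. Since `y` is transcendental, there are no zero divisors.

For `W = span {1, x, y}` the dimension of `Wⁿ` is at most quadratic in `n`. If `a, b ∈ Wᵈ` had no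
nontrivial relation `u a = v b`, then `(u, v) ↦ u a - v b` would embed `Wⁿ × Wⁿ` in `Wⁿ⁺ᵈ`, and the
dimension would double every `d` steps. So the left Ore condition holds, and Ore localization at the
nonzero elements is the division ring.
-/

open Asymptotics Filter Module

universe u

section Derivation

open Finset.HasAntidiagonal (antidiagonal mem_antidiagonal)

variable {R A : Type*} [Semiring R] [NonUnitalNonAssocSemiring A] [Module R A]
  {δ : Module.End R A}

theorem pow_apply_mul_eq_sum_of_leibniz (hδ : ∀ a b, δ (a * b) = δ a * b + a * δ b) (n : ℕ)
    (a b : A) :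
    (δ ^ n) (a * b) =
      ∑ ij ∈ antidiagonal n, n.choose ij.1 • ((δ ^ ij.1) a * (δ ^ ij.2) b) := by
  induction n with
  | zero => simp
  | succ n ih =>
    rw [Finset.sum_antidiagonal_choose_succ_nsmul (M := A)
      (fun i j => (δ ^ i) a * (δ ^ j) b) n]
    simp only [pow_succ', Module.End.mul_apply, ih, map_sum, map_nsmul, hδ, smul_add,
      Finset.sum_add_distrib]
    rw [add_comm]
    refine congrArg _ (Finset.sum_congr rfl fun ij hij => ?_)
    rw [Nat.choose_symm_of_eq_add (mem_antidiagonal.1 hij).symm]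

theorem pow_add_apply_mul_eq_of_leibniz (hδ : ∀ a b, δ (a * b) = δ a * b + a * δ b) {m n : ℕ}
    {a b : A} (ha : (δ ^ (m + 1)) a = 0) (hb : (δ ^ (n + 1)) b = 0) :
    (δ ^ (m + n)) (a * b) = (m + n).choose m • ((δ ^ m) a * (δ ^ n) b) := by
  rw [pow_apply_mul_eq_sum_of_leibniz hδ]
  refine Finset.sum_eq_single_of_mem (m, n) (mem_antidiagonal.2 rfl) ?_
  rintro ⟨i, j⟩ hij hne
  rw [mem_antidiagonal] at hij
  rcases Nat.lt_trichotomy i m with hi | rfl | hi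
  · rw [Module.End.pow_map_zero_of_le (by omega : n + 1 ≤ j) hb, mul_zero, smul_zero]
  · obtain rfl : j = n := Nat.add_left_cancel hij
    exact absurd rfl hne
  · rw [Module.End.pow_map_zero_of_le hi ha, zero_mul, smul_zero]

end Derivation

section Growth

section CommSemiring

variable {R A : Type*} [CommSemiring R] [Semiring A] [Algebra R A]

theorem one_le_span_insert_one (s : Set A) : 1 ≤ Submodule.span R (insert 1 s) :=
  Submodule.one_le.2 (Submodule.subset_span (Set.mem_insert 1 s))

theorem adjoin_span_insert_one (s : Set A) :
    Algebra.adjoin R (Submodule.span R (insert 1 s) : Set A) = Algebra.adjoin R s := by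
  rw [Algebra.adjoin_span, Algebra.adjoin_insert_one]

theorem exists_mem_pow_of_mem_adjoin {W : Submodule R A} (hW : 1 ≤ W) {a : A}
    (ha : a ∈ Algebra.adjoin R (W : Set A)) : ∃ n, a ∈ W ^ n := by
  induction ha using Algebra.adjoin_induction with
  | mem a ha => exact ⟨1, (pow_one W).symm ▸ ha⟩
  | algebraMap r => exact ⟨0, pow_zero W ▸ Submodule.algebraMap_mem r⟩
  | add a b _ _ iha ihb =>
    obtain ⟨m, hm⟩ := iha
    obtain ⟨n, hn⟩ := ihb
    exact ⟨m + n, add_mem (pow_le_pow_right₀ hW (m.le_add_right n) hm)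
      (pow_le_pow_right₀ hW (n.le_add_left m) hn)⟩
  | mul a b _ _ iha ihb =>
    obtain ⟨m, hm⟩ := iha
    obtain ⟨n, hn⟩ := ihb
    exact ⟨m + n, pow_add W m n ▸ Submodule.mul_mem_mul hm hn⟩

theorem pow_le_adjoin (W : Submodule R A) (n : ℕ) :
    W ^ n ≤ Subalgebra.toSubmodule (Algebra.adjoin R (W : Set A)) := by
  induction n with
  | zero => simp
  | succ n ih =>
    rw [pow_succ]
    exact Submodule.mul_le.2 fun a ha b hb =>
      (Algebra.adjoin R (W : Set A)).mul_mem (ih ha) (Algebra.subset_adjoin hb)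

end CommSemiring

section Field

variable {k A : Type*} [Field k] [Ring A] [Algebra k A] {W : Submodule k A}

theorem exists_mul_eq_mul_of_finrank_lt {U V : Submodule k A} [FiniteDimensional k V] {a b : A}
    (ha : ∀ u ∈ U, u * a ∈ V) (hb : ∀ u ∈ U, u * b ∈ V) (h : finrank k V < 2 * finrank k U) :
    ∃ u ∈ U, ∃ v ∈ U, (u ≠ 0 ∨ v ≠ 0) ∧ u * a = v * b := by
  have : FiniteDimensional k U := FiniteDimensional.of_finrank_pos (by omega)
  let φ : U × U →ₗ[k] V :=
    ((LinearMap.mulRight k a).restrict ha).coprod (-(LinearMap.mulRight k b).restrict hb)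
  have hker : φ.ker ≠ ⊥ :=
    LinearMap.ker_ne_bot_of_finrank_lt (by rw [finrank_prod]; omega)
  obtain ⟨⟨u, v⟩, huv, hne⟩ := (Submodule.ne_bot_iff _).1 hker
  refine ⟨u, u.2, v, v.2, ?_, ?_⟩
  · by_contra! h0
    exact hne (Prod.ext (Subtype.ext h0.1) (Subtype.ext h0.2))
  · have h0 : (u * a + -(v * b) : A) = 0 := congrArg Subtype.val huv
    rwa [← sub_eq_add_neg, sub_eq_zero] at h0

theorem exists_finrank_pow_add_lt [Nontrivial A]
    (hgrowth : ∀ r : ℝ, 1 < r → (fun n => (finrank k ↥(W ^ n) : ℝ)) =o[atTop] fun n => r ^ n)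
    {d : ℕ} (hd : d ≠ 0) :
    ∃ n, finrank k ↥(W ^ (n + d)) < 2 * finrank k ↥(W ^ n) := by
  by_contra! hdouble
  have hexp (n : ℕ) : 2 ^ n ≤ finrank k ↥(W ^ (n * d)) := by
    induction n with
    | zero =>
      rw [zero_mul, pow_zero, pow_zero, Submodule.one_eq_span,
        finrank_span_singleton one_ne_zero]
    | succ n ih =>
      rw [pow_succ', add_mul, one_mul]
      exact (Nat.mul_le_mul_left 2 ih).trans (hdouble (n * d))
  obtain ⟨r, hr, hrd⟩ : ∃ r : ℝ, 1 < r ∧ r ^ d = 2 :=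
    ⟨2 ^ (d⁻¹ : ℝ), Real.one_lt_rpow one_lt_two (by positivity),
      Real.rpow_inv_natCast_pow zero_le_two hd⟩
  have hsmall : ∀ᶠ n in atTop, ‖(finrank k ↥(W ^ (n * d)) : ℝ)‖ ≤ 1 / 2 * ‖r ^ (n * d)‖ :=
    ((hgrowth r hr).comp_tendsto (tendsto_id.atTop_mul_const' (Nat.pos_of_ne_zero hd))).bound
      one_half_pos
  obtain ⟨n, hn⟩ := hsmall.exists
  have hn' : (2 : ℝ) ^ n ≤ finrank k ↥(W ^ (n * d)) := mod_cast hexp n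
  rw [mul_comm n d, pow_mul r, hrd, mul_comm d n, Real.norm_natCast, norm_pow, Real.norm_two] at hn
  have : (0 : ℝ) < 2 ^ n := by positivity
  linarith

theorem exists_mul_eq_mul_of_subexponential_growth [Nontrivial A] (hW : 1 ≤ W) (hfg : W.FG)
    (hgrowth : ∀ r : ℝ, 1 < r → (fun n => (finrank k ↥(W ^ n) : ℝ)) =o[atTop] fun n => r ^ n)
    {a b : A} (ha : a ∈ Algebra.adjoin k (W : Set A)) (hb : b ∈ Algebra.adjoin k (W : Set A)) :
    ∃ u ∈ Algebra.adjoin k (W : Set A), ∃ v ∈ Algebra.adjoin k (W : Set A),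
      (u ≠ 0 ∨ v ≠ 0) ∧ u * a = v * b := by
  obtain ⟨d₁, ha⟩ := exists_mem_pow_of_mem_adjoin hW ha
  obtain ⟨d₂, hb⟩ := exists_mem_pow_of_mem_adjoin hW hb
  let d := d₁ + d₂ + 1
  replace ha : a ∈ W ^ d := pow_le_pow_right₀ hW (by omega) ha
  replace hb : b ∈ W ^ d := pow_le_pow_right₀ hW (by omega) hb
  obtain ⟨n, hn⟩ := exists_finrank_pow_add_lt hgrowth (d₁ + d₂).succ_ne_zero
  have : FiniteDimensional k ↥(W ^ (n + d)) := Module.Finite.iff_fg.2 (hfg.pow (n + d))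
  have hmul {c : A} (hc : c ∈ W ^ d) (u : A) (hu : u ∈ W ^ n) : u * c ∈ W ^ (n + d) :=
    pow_add W n d ▸ Submodule.mul_mem_mul hu hc
  obtain ⟨u, hu, v, hv, huv⟩ := exists_mul_eq_mul_of_finrank_lt (hmul ha) (hmul hb) hn
  exact ⟨u, pow_le_adjoin W n hu, v, pow_le_adjoin W n hv, huv⟩

end Field

end Growth

theorem exists_divisionRing_of_leftOre {R : Type u} [Ring R] [Nontrivial R] [NoZeroDivisors R]
    (hore : ∀ r s : R, s ≠ 0 → ∃ u v : R, u ≠ 0 ∧ u * r = v * s) :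
    ∃ (K : Type u) (_ : DivisionRing K) (ι : R →+* K),
      Function.Injective ι ∧ ∀ z : K, ∃ a b : R, b ≠ 0 ∧ z = (ι b)⁻¹ * ι a := by
  obtain ⟨_⟩ : Nonempty (OreLocalization.OreSet (nonZeroDivisors R)) := by
    refine OreLocalization.nonempty_oreSet_iff_of_noZeroDivisors.2 fun r s => ?_
    obtain ⟨u, v, hu, huv⟩ := hore r s (nonZeroDivisors.ne_zero s.2)
    exact ⟨v, ⟨u, mem_nonZeroDivisors_of_ne_zero hu⟩, huv⟩
  let ι : R →+* OreLocalization (nonZeroDivisors R) R := OreLocalization.numeratorRingHom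
  have hι : Function.Injective ι := OreLocalization.numeratorHom_inj inf_le_left
  refine ⟨OreLocalization (nonZeroDivisors R) R, inferInstance, ι, hι, fun z => ?_⟩
  induction z using OreLocalization.ind with
  | _ r s =>
    have hs : (s : R) ≠ 0 := nonZeroDivisors.ne_zero s.2
    refine ⟨r, s, hs, (eq_inv_mul_iff_mul_eq₀ ((map_ne_zero_iff ι hι).2 hs)).2 ?_⟩
    exact OreLocalization.mul_cancel

section CanonicalCommutation

attribute [local instance] LieRing.ofAssociativeRing

theorem lie_mul_eq_add {A : Type*} [NonUnitalRing A] (y a b : A) :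
    ⁅y, a * b⁆ = ⁅y, a⁆ * b + a * ⁅y, b⁆ := by
  simp only [Ring.lie_def, sub_mul, mul_sub, mul_assoc, sub_add_sub_cancel]

section CommRing

variable {R A : Type*} [CommRing R] [Ring A] [Algebra R A] {x y : A}

theorem lie_aeval_of_lie_eq_one (h : ⁅y, x⁆ = 1) (p : R[X]) :
    ⁅y, aeval x p⁆ = aeval x (derivative p) := by
  induction p using Polynomial.induction_on with
  | C r => simp [Ring.lie_def, Algebra.commutes]
  | add p q hp hq => rw [map_add, map_add, map_add, lie_add, hp, hq]
  | monomial n r ih =>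
    rw [pow_succ, ← mul_assoc, map_mul, aeval_X, lie_mul_eq_add, ih, h,
      derivative_mul (g := X), derivative_X, mul_one, mul_one, map_add, map_mul (aeval x) _ X,
      aeval_X]

theorem lie_aeval_self (y : A) (q : R[X]) : ⁅y, aeval y q⁆ = 0 := by
  simpa [commute_iff_lie_eq] using (Commute.all X q).map (aeval y)

theorem ad_pow_aeval_mul_aeval (h : ⁅y, x⁆ = 1) (n : ℕ) (p q : R[X]) :
    (LieAlgebra.ad R A y ^ n) (aeval x p * aeval y q) =
      aeval x (derivative^[n] p) * aeval y q := by
  induction n with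
  | zero => rfl
  | succ n ih =>
    rw [pow_succ', Module.End.mul_apply, ih, LieAlgebra.ad_apply, lie_mul_eq_add,
      lie_aeval_of_lie_eq_one h, lie_aeval_self, mul_zero, add_zero, Function.iterate_succ_apply']

/-- The normal ordering map: a polynomial `∑ qᵢ Xⁱ` with coefficients `qᵢ` in `R[X]` goes to
`∑ xⁱ qᵢ(y)`, with all powers of `x` to the left of all powers of `y`. -/
noncomputable def normalOrdered (R : Type*) {A : Type*} [CommRing R] [Ring A] [Algebra R A]
    (x y : A) : R[X][X] →ₗ[R] A :=
  lsum fun i => (LinearMap.mulLeft R (x ^ i)).comp (aeval y).toLinearMap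

theorem normalOrdered_monomial (x y : A) (i : ℕ) (q : R[X]) :
    normalOrdered R x y (monomial i q) = x ^ i * aeval y q :=
  sum_monomial_index q (fun i q => x ^ i * aeval y q) (by simp)

theorem ad_pow_natDegree_normalOrdered (h : ⁅y, x⁆ = 1) (P : R[X][X]) :
    (LieAlgebra.ad R A y ^ P.natDegree) (normalOrdered R x y P) =
      P.natDegree.factorial • aeval y P.leadingCoeff := by
  have hmonomial (i : ℕ) (q : R[X]) :
      (LieAlgebra.ad R A y ^ P.natDegree) (normalOrdered R x y (monomial i q)) =
        aeval x (derivative^[P.natDegree] (X ^ i : R[X])) * aeval y q := by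
    rw [← ad_pow_aeval_mul_aeval h, normalOrdered_monomial, aeval_X_pow]
  have hexpand : normalOrdered R x y P =
      ∑ i ∈ Finset.range (P.natDegree + 1), normalOrdered R x y (monomial i (P.coeff i)) := by
    conv_lhs => rw [P.as_sum_range, map_sum]
  rw [hexpand, map_sum, Finset.sum_range_succ, Finset.sum_eq_zero, zero_add, hmonomial,
    coeff_natDegree, iterate_derivative_X_pow_eq_smul]
  · simp [Nat.descFactorial_self, Nat.cast_smul_eq_nsmul]
  · intro i hi
    rw [hmonomial, iterate_derivative_eq_zero, map_zero, zero_mul]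
    exact (natDegree_X_pow_le i).trans_lt (Finset.mem_range.1 hi)

theorem ad_pow_natDegree_succ_normalOrdered (h : ⁅y, x⁆ = 1) (P : R[X][X]) :
    (LieAlgebra.ad R A y ^ (P.natDegree + 1)) (normalOrdered R x y P) = 0 := by
  rw [pow_succ', Module.End.mul_apply, ad_pow_natDegree_normalOrdered h, map_nsmul,
    LieAlgebra.ad_apply, lie_aeval_self, smul_zero]

/-- The span of the normally ordered monomials `xⁱ yʲ` with `i, j ≤ n`. The exponents are bounded
separately, and not by total degree, so that the dimension bound is immediate. -/
def normalOrderedBox (R : Type*) {A : Type*} [CommRing R] [Ring A] [Algebra R A] (x y : A) (n : ℕ) :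
    Submodule R A :=
  Submodule.span R (Set.range fun ij : Fin (n + 1) × Fin (n + 1) => x ^ ij.1.val * y ^ ij.2.val)

theorem pow_mul_pow_mem_normalOrderedBox (x y : A) {i j n : ℕ} (hi : i ≤ n) (hj : j ≤ n) :
    x ^ i * y ^ j ∈ normalOrderedBox R x y n :=
  Submodule.subset_span ⟨(⟨i, Nat.lt_succ_of_le hi⟩, ⟨j, Nat.lt_succ_of_le hj⟩), rfl⟩

theorem normalOrderedBox_le_range (x y : A) (n : ℕ) :
    normalOrderedBox R x y n ≤ (normalOrdered R x y).range := by
  refine Submodule.span_le.2 ?_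
  rintro _ ⟨⟨i, j⟩, rfl⟩
  exact ⟨monomial i.val (X ^ j.val), by rw [normalOrdered_monomial, aeval_X_pow]⟩

theorem span_mul_normalOrderedBox_le (h : ⁅y, x⁆ = 1) (n : ℕ) :
    Submodule.span R {1, x, y} * normalOrderedBox R x y n ≤ normalOrderedBox R x y (n + 1) := by
  rw [normalOrderedBox, Submodule.span_mul_span, Submodule.span_le]
  rintro _ ⟨a, ha, _, ⟨⟨⟨i, hi⟩, ⟨j, hj⟩⟩, rfl⟩, rfl⟩
  have hmem {i' j' : ℕ} (hi' : i' ≤ n + 1) (hj' : j' ≤ n + 1) :=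
    pow_mul_pow_mem_normalOrderedBox (R := R) x y hi' hj'
  rcases ha with rfl | rfl | rfl
  · simpa using hmem hi.le hj.le
  · simpa [← mul_assoc, ← pow_succ'] using hmem hi hj.le
  · have hcomm : a * x ^ i = x ^ i * a + i • x ^ (i - 1) := by
      have hlie := lie_aeval_of_lie_eq_one h (X ^ i : R[X])
      rw [Ring.lie_def, sub_eq_iff_eq_add'] at hlie
      simpa [derivative_X_pow] using hlie
    have hsplit : a * (x ^ i * a ^ j) = x ^ i * a ^ (j + 1) + i • (x ^ (i - 1) * a ^ j) := by
      rw [← mul_assoc, hcomm, add_mul, mul_assoc, ← pow_succ', smul_mul_assoc]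
    change a * (x ^ i * a ^ j) ∈ normalOrderedBox R x a (n + 1)
    rw [hsplit]
    exact add_mem (hmem hi.le hj) (nsmul_mem (hmem ((Nat.sub_le i 1).trans hi.le) hj.le) i)

theorem span_pow_le_normalOrderedBox (h : ⁅y, x⁆ = 1) (n : ℕ) :
    Submodule.span R {1, x, y} ^ n ≤ normalOrderedBox R x y n := by
  induction n with
  | zero =>
    rw [pow_zero, Submodule.one_le]
    simpa using pow_mul_pow_mem_normalOrderedBox (R := R) x y (le_refl 0) (le_refl 0)
  | succ n ih =>
    rw [pow_succ']
    exact (mul_le_mul_right ih _).trans (span_mul_normalOrderedBox_le h n)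

theorem exists_normalOrdered_eq_of_mem_adjoin (h : ⁅y, x⁆ = 1) {a : A}
    (ha : a ∈ Algebra.adjoin R {x, y}) : ∃ P, normalOrdered R x y P = a := by
  rw [← adjoin_span_insert_one] at ha
  obtain ⟨n, hn⟩ := exists_mem_pow_of_mem_adjoin (one_le_span_insert_one _) ha
  exact normalOrderedBox_le_range x y n (span_pow_le_normalOrderedBox h n hn)

end CommRing

section Field

variable {k A : Type*} [Field k] [Ring A] [Algebra k A] {x y : A}

theorem transcendental_of_lie_eq_one [CharZero k] [Nontrivial A] (h : ⁅y, x⁆ = 1) :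
    Transcendental k x := by
  intro halg
  have hint : IsIntegral k x := halg.isIntegral
  have hpos : 0 < (minpoly k x).natDegree := minpoly.natDegree_pos hint
  have hroot : aeval x (derivative (minpoly k x)) = 0 := by
    rw [← lie_aeval_of_lie_eq_one h, minpoly.aeval, lie_zero]
  have hne : derivative (minpoly k x) ≠ 0 := fun h0 =>
    hpos.ne' (derivative_eq_zero.1 h0)
  exact (minpoly.degree_le_of_ne_zero k x hne hroot).not_gt
    (degree_derivative_lt (minpoly.ne_zero hint))

theorem normalOrdered_mul_normalOrdered_ne_zero [CharZero k] [Nontrivial A] (h : ⁅y, x⁆ = 1)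
    {P Q : k[X][X]} (hP : P ≠ 0) (hQ : Q ≠ 0) :
    normalOrdered k x y P * normalOrdered k x y Q ≠ 0 := by
  intro h0
  have hy : Transcendental k y :=
    transcendental_of_lie_eq_one (y := -x) (by rw [neg_lie, lie_skew, h])
  have htop := pow_add_apply_mul_eq_of_leibniz (lie_mul_eq_add y)
    (ad_pow_natDegree_succ_normalOrdered h P) (ad_pow_natDegree_succ_normalOrdered h Q)
  rw [h0, map_zero, ad_pow_natDegree_normalOrdered h, ad_pow_natDegree_normalOrdered h] at htop
  simp only [← map_nsmul, ← map_mul] at htop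
  have hlead := transcendental_iff.1 hy _ htop.symm
  simp [hP, hQ, Nat.factorial_ne_zero, (Nat.choose_pos (Nat.le_add_right _ _)).ne'] at hlead

instance finiteDimensional_normalOrderedBox (x y : A) (n : ℕ) :
    FiniteDimensional k (normalOrderedBox k x y n) :=
  FiniteDimensional.span_of_finite k (Set.finite_range _)

theorem finrank_normalOrderedBox_le (x y : A) (n : ℕ) :
    finrank k (normalOrderedBox k x y n) ≤ (n + 1) ^ 2 :=
  (finrank_range_le_card _).trans_eq (by simp [sq])

theorem finrank_span_pow_isLittleO_pow (h : ⁅y, x⁆ = 1) {r : ℝ} (hr : 1 < r) :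
    (fun n => (finrank k ↥(Submodule.span k {1, x, y} ^ n) : ℝ)) =o[atTop] fun n => r ^ n := by
  have hquadratic (n : ℕ) : finrank k ↥(Submodule.span k {1, x, y} ^ n) ≤ (n + 1) ^ 2 :=
    (Submodule.finrank_mono (span_pow_le_normalOrderedBox h n)).trans
      (finrank_normalOrderedBox_le x y n)
  calc
    _ =O[atTop] fun n : ℕ => ((n + 1 : ℕ) : ℝ) ^ 2 :=
      .of_norm_le fun n => by simpa using mod_cast hquadratic n
    _ =o[atTop] fun n : ℕ => r ^ (n + 1) :=
      (isLittleO_pow_const_const_pow_of_one_lt 2 hr).comp_tendsto (tendsto_add_atTop_nat 1)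
    _ =O[atTop] fun n : ℕ => r ^ n := by
      simpa only [pow_succ'] using isBigO_const_mul_self r (fun n : ℕ => r ^ n) atTop

theorem noZeroDivisors_adjoin_of_lie_eq_one [CharZero k] [Nontrivial A] (h : ⁅y, x⁆ = 1) :
    NoZeroDivisors (Algebra.adjoin k {x, y}) where
  eq_zero_or_eq_zero_of_mul_eq_zero := by
    rintro ⟨a, ha⟩ ⟨b, hb⟩ hab
    obtain ⟨P, rfl⟩ := exists_normalOrdered_eq_of_mem_adjoin h ha
    obtain ⟨Q, rfl⟩ := exists_normalOrdered_eq_of_mem_adjoin h hb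
    have hPQ : P = 0 ∨ Q = 0 := by
      by_contra! hne
      exact normalOrdered_mul_normalOrdered_ne_zero h hne.1 hne.2 (congrArg Subtype.val hab)
    exact hPQ.imp (fun hP => Subtype.ext (by simp [hP])) fun hQ => Subtype.ext (by simp [hQ])

theorem leftOre_adjoin_of_lie_eq_one [CharZero k] [Nontrivial A] (h : ⁅y, x⁆ = 1)
    (r s : Algebra.adjoin k {x, y}) (hs : s ≠ 0) :
    ∃ u v : Algebra.adjoin k {x, y}, u ≠ 0 ∧ u * r = v * s := by
  have := noZeroDivisors_adjoin_of_lie_eq_one (k := k) h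
  obtain ⟨u, hu, v, hv, hne, huv⟩ := exists_mul_eq_mul_of_subexponential_growth
    (one_le_span_insert_one _) (Submodule.fg_span (Set.toFinite _))
    (fun _ => finrank_span_pow_isLittleO_pow h) ((adjoin_span_insert_one _).ge r.2)
    ((adjoin_span_insert_one _).ge s.2)
  rw [adjoin_span_insert_one] at hu hv
  lift u to Algebra.adjoin k {x, y} using hu
  lift v to Algebra.adjoin k {x, y} using hv
  replace huv : u * r = v * s := Subtype.ext huv
  refine ⟨u, v, ?_, huv⟩
  rintro rfl
  rw [zero_mul, eq_comm, mul_eq_zero, or_iff_left hs] at huv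
  simp [huv] at hne

end Field

end CanonicalCommutation

theorem heisenberg_rational_extension_general {k : Type*} {A : Type u} [Field k] [CharZero k]
    [Ring A] [Nontrivial A] [Algebra k A] {x y : A} (h : ⁅y, x⁆ = 1) :
    ∃ (K : Type u) (_ : DivisionRing K) (ι : Algebra.adjoin k {x, y} →+* K),
      Function.Injective ι ∧ ∀ z : K, ∃ a b : Algebra.adjoin k {x, y}, b ≠ 0 ∧ z = (ι b)⁻¹ * ι a :=
  have := noZeroDivisors_adjoin_of_lie_eq_one (k := k) h
  exists_divisionRing_of_leftOre (leftOre_adjoin_of_lie_eq_one h)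

theorem lie_D_M_eq_one : ⁅D, M⁆ = 1 := by
  refine LinearMap.ext fun p => ?_
  simp [Ring.lie_def, D, M, derivative_mul]

/-- The Heisenberg algebra embeds into a division ring in which every element
is a left fraction of elements of the Heisenberg algebra. -/
theorem heisenberg_rational_extension :
    ∃ (K : Type) (_ : DivisionRing K) (ι : H →+* K),
      Function.Injective ι ∧
      ∀ k : K, ∃ a b : H, b ≠ 0 ∧ k = (ι b)⁻¹ * (ι a) := by
  exact heisenberg_rational_extension_general lie_D_M_eq_one
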